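/- arXiv:1203.4066 — 9 statements merged into one kernel-verified Lean document; each statement's English description precedes it below -/
import Mathlib

section
/- Let b be a positive integer and let H(b) = lcm(b, λ(b)) where λ is the Carmichael function. Let M be a positive integer greater than 1 with prime factorization M = p_1^{k_1} ⋯ p_t^{k_t}. Then M^M mod b ≠ (M + H(b))^(M + H(b)) mod b if and only if p_i^{k_i·M + 1} divides b for some i ∈ {1, …, t}. -/
/-- The Carmichael function `λ(n)`, defined as the exponent of the unit group of `ZMod n`. -/
noncomputable def carmichael (n : ℕ) : ℕ := Monoid.exponent (ZMod n)ˣ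

/-- `H b = lcm(b, λ(b))`. -/
noncomputable def H (b : ℕ) : ℕ := Nat.lcm b (carmichael b)

/-!
Modulo `b` we have `(M + H b) ^ (M + H b) ≡ M ^ (M + H b)`, so the question is whether adding a
multiple `L` of `λ(b)` to an exponent `e` changes `M ^ e` modulo some prime power `p ^ k ∣ b`.
If `p ∤ M`, then `M ^ L ≡ 1` modulo `p ^ k` and nothing changes. If `p ∣ M`, then `M ^ L - 1` is a
unit modulo `p ^ k`, so `M ^ e * (M ^ L - 1)` vanishes only if `M ^ e` does, that is, only if
`k ≤ v_p(M) * e`.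
-/

theorem carmichael_ne_zero {n : ℕ} (hn : n ≠ 0) : carmichael n ≠ 0 :=
  have : NeZero n := ⟨hn⟩
  Monoid.exponent_ne_zero_of_finite

theorem carmichael_dvd_carmichael {m n : ℕ} (hn : n ≠ 0) (hmn : m ∣ n) :
    carmichael m ∣ carmichael n :=
  have : NeZero n := ⟨hn⟩
  MonoidHom.exponent_dvd (ZMod.unitsMap_surjective hmn)

theorem pow_modEq_one_of_carmichael_dvd {a n L : ℕ} (ha : a.Coprime n)
    (hL : carmichael n ∣ L) : a ^ L ≡ 1 [MOD n] := by
  have hunit : ZMod.unitOfCoprime a ha ^ L = 1 := Monoid.exponent_dvd_iff_forall_pow_eq_one.1 hL _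
  rw [← ZMod.natCast_eq_natCast_iff]
  simpa using congrArg Units.val hunit

theorem H_ne_zero {b : ℕ} (hb : b ≠ 0) : H b ≠ 0 :=
  Nat.lcm_ne_zero hb (carmichael_ne_zero hb)

theorem add_H_pow_modEq (b a e : ℕ) : (a + H b) ^ e ≡ a ^ e [MOD b] :=
  have hH : H b ≡ 0 [MOD b] := Nat.modEq_zero_iff_dvd.2 (Nat.dvd_lcm_left _ _)
  (hH.add_left a).pow e

theorem modEq_iff_forall_prime_pow {a c n : ℕ} :
    a ≡ c [MOD n] ↔ ∀ p k : ℕ, p.Prime → p ^ k ∣ n → a ≡ c [MOD p ^ k] := by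
  simp only [Nat.modEq_iff_dvd, ← Int.dvd_natAbs (b := (c : ℤ) - a), Int.natCast_dvd_natCast]
  exact Nat.dvd_iff_prime_pow_dvd_dvd _ _

theorem pow_add_modEq_pow_iff_pow_dvd_pow {d a L : ℕ} (hd : d ∣ a) (hL : L ≠ 0) (e k : ℕ) :
    a ^ (e + L) ≡ a ^ e [MOD d ^ k] ↔ d ^ k ∣ a ^ e := by
  have hcoprime : IsCoprime ((d : ℤ) ^ k) (1 - (a : ℤ) ^ L) := by
    obtain ⟨c, hc⟩ : (d : ℤ) ∣ (a : ℤ) ^ L := dvd_pow (Int.natCast_dvd_natCast.2 hd) hL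
    exact IsCoprime.pow_left ⟨c, 1, by rw [hc]; ring⟩
  have hfactor : (a : ℤ) ^ e - (a : ℤ) ^ (e + L) = (a : ℤ) ^ e * (1 - (a : ℤ) ^ L) := by ring
  rw [Nat.modEq_iff_dvd, ← Int.natCast_dvd_natCast]
  push_cast
  rw [hfactor]
  exact ⟨hcoprime.dvd_of_dvd_mul_right, (·.mul_right _)⟩

theorem prime_pow_dvd_pow_iff {p a : ℕ} (hp : p.Prime) (ha : a ≠ 0) (k e : ℕ) :
    p ^ k ∣ a ^ e ↔ k ≤ a.factorization p * e := by
  rw [hp.pow_dvd_iff_le_factorization (pow_ne_zero e ha), Nat.factorization_pow,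
    Finsupp.smul_apply, smul_eq_mul, mul_comm]

theorem pow_add_modEq_pow_iff_forall_prime {b a L : ℕ} (hb : b ≠ 0) (ha : a ≠ 0) (hL : L ≠ 0)
    (hdvd : carmichael b ∣ L) (e : ℕ) :
    a ^ (e + L) ≡ a ^ e [MOD b] ↔
      ∀ p : ℕ, p.Prime → p ∣ a → ¬ p ^ (a.factorization p * e + 1) ∣ b := by
  rw [modEq_iff_forall_prime_pow]
  constructor
  · intro h p hp hpa hpb
    have hpow := (pow_add_modEq_pow_iff_pow_dvd_pow hpa hL e _).1 (h p _ hp hpb)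
    exact Nat.not_succ_le_self _ ((prime_pow_dvd_pow_iff hp ha _ e).1 hpow)
  · intro h p k hp hpb
    by_cases hpa : p ∣ a
    · rw [pow_add_modEq_pow_iff_pow_dvd_pow hpa hL, prime_pow_dvd_pow_iff hp ha]
      by_contra! hlt
      exact h p hp hpa ((pow_dvd_pow p hlt).trans hpb)
    · have hcoprime : a.Coprime (p ^ k) := ((hp.coprime_iff_not_dvd.2 hpa).pow_left k).symm
      have hone : a ^ L ≡ 1 [MOD p ^ k] :=
        pow_modEq_one_of_carmichael_dvd hcoprime ((carmichael_dvd_carmichael hb hpb).trans hdvd)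
      simpa only [pow_add, mul_one] using hone.mul_left (a ^ e)

theorem stmt_0 (b M : ℕ) (hb : 0 < b) (hM : 1 < M) :
    M ^ M % b ≠ (M + H b) ^ (M + H b) % b ↔
      ∃ p : ℕ, p.Prime ∧ p ∣ M ∧ p ^ (M.factorization p * M + 1) ∣ b := by
  have hbase : (M + H b) ^ (M + H b) % b = M ^ (M + H b) % b := add_H_pow_modEq b M _
  have hexp : M ^ (M + H b) % b = M ^ M % b ↔ _ :=
    pow_add_modEq_pow_iff_forall_prime hb.ne' (Nat.ne_zero_of_lt hM) (H_ne_zero hb.ne')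
      (Nat.dvd_lcm_right _ _) M
  rw [hbase, ne_comm, Ne, hexp]
  simp only [not_forall, not_not, exists_prop]
end

section
/- Let b and T be positive integers and suppose there exists n₀ such that n^n ≡ (n+T)^(n+T) (mod b) for every n ≥ n₀. Then b divides T. -/
/-!
Work in `ℤ/b`. Taking `n` to be a positive multiple of `b` turns the congruence into
`0 = T ^ (n + T)`, so `T` is nilpotent. Taking `n ≡ 1` turns it into `1 = x ^ m` with `x = 1 + T`
and `m ≡ 1 + T` a unit. Here `x ^ m - 1 = (x - 1) (1 + x + ⋯ + x ^ (m - 1))`, and the second factor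
is a unit because it differs from `m` by a nilpotent; hence `x = 1`.
-/

section Unipotent

variable {R : Type*} [Ring R] {x : R}

theorem isNilpotent_pow_sub_one (hx : IsNilpotent (x - 1)) (k : ℕ) : IsNilpotent (x ^ k - 1) := by
  have hcomm : Commute (x - 1) (∑ i ∈ Finset.range k, x ^ i) :=
    Commute.sum_right _ _ _ fun i _ ↦
      ((Commute.refl x).pow_right i).sub_left (Commute.one_left _)
  rw [← mul_geom_sum]
  exact hcomm.isNilpotent_mul_right hx

theorem isUnit_geom_sum_of_isNilpotent_sub_one {k : ℕ} (hx : IsNilpotent (x - 1))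
    (hk : IsUnit (k : R)) : IsUnit (∑ i ∈ Finset.range k, x ^ i) := by
  have hnil : IsNilpotent (∑ i ∈ Finset.range k, (x ^ i - 1)) :=
    Commute.isNilpotent_sum (fun i _ ↦ isNilpotent_pow_sub_one hx i) fun i j _ _ ↦
      (((Commute.refl x).pow_pow i j).sub_right (Commute.one_right _)).sub_left
        (Commute.one_left _)
  have hsum : ∑ i ∈ Finset.range k, x ^ i = k + ∑ i ∈ Finset.range k, (x ^ i - 1) := by
    simp
  rw [hsum]
  exact hnil.isUnit_add_left_of_commute hk (Nat.commute_cast _ k)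

theorem eq_one_of_pow_eq_one_of_isNilpotent_sub_one {k : ℕ} (hx : IsNilpotent (x - 1))
    (hk : IsUnit (k : R)) (hpow : x ^ k = 1) : x = 1 := by
  have hmul : (x - 1) * ∑ i ∈ Finset.range k, x ^ i = 0 := by
    rw [mul_geom_sum, hpow, sub_self]
  exact sub_eq_zero.mp <|
    (isUnit_geom_sum_of_isNilpotent_sub_one hx hk).mul_left_eq_zero.mp hmul

end Unipotent

section SelfPower

variable {R : Type*} {n T : ℕ}

theorem isNilpotent_natCast_of_self_pow_eq [Semiring R] (hn : n ≠ 0) (hn_cast : (n : R) = 0)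
    (hpow : (n : R) ^ n = ((n + T : ℕ) : R) ^ (n + T)) : IsNilpotent (T : R) := by
  refine ⟨n + T, ?_⟩
  simpa only [Nat.cast_add, hn_cast, zero_pow hn, zero_add] using hpow.symm

theorem natCast_eq_zero_of_self_pow_eq [Ring R] (hT : IsNilpotent (T : R))
    (hn_cast : (n : R) = 1) (hpow : (n : R) ^ n = ((n + T : ℕ) : R) ^ (n + T)) :
    (T : R) = 0 := by
  have hcast : ((n + T : ℕ) : R) = 1 + T := by rw [Nat.cast_add, hn_cast]
  have hunit : IsUnit ((n + T : ℕ) : R) := hcast ▸ hT.isUnit_one_add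
  have hone_pow : (1 + T : R) ^ (n + T) = 1 := by rw [← hcast, ← hpow, hn_cast, one_pow]
  have hone : (1 + T : R) = 1 :=
    eq_one_of_pow_eq_one_of_isNilpotent_sub_one (by rwa [add_sub_cancel_left]) hunit hone_pow
  exact add_eq_left.mp hone

end SelfPower

theorem stmt_1 (b T : ℕ) (hb : 0 < b) (hT : 0 < T)
    (hper : ∃ n₀ : ℕ, ∀ n ≥ n₀, n ^ n % b = (n + T) ^ (n + T) % b) :
    b ∣ T := by
  obtain ⟨n₀, hper⟩ := hper
  have hpow : ∀ n ≥ n₀, (n : ZMod b) ^ n = ((n + T : ℕ) : ZMod b) ^ (n + T) := fun n hn ↦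
    mod_cast (ZMod.natCast_eq_natCast_iff' _ _ b).mpr (hper n hn)
  have hnil : IsNilpotent (T : ZMod b) :=
    isNilpotent_natCast_of_self_pow_eq (n := b * (n₀ + 1)) (by positivity) (by simp)
      (hpow _ (by nlinarith))
  have hzero : (T : ZMod b) = 0 :=
    natCast_eq_zero_of_self_pow_eq (n := b * n₀ + 1) hnil (by simp) (hpow _ (by nlinarith))
  exact (ZMod.natCast_eq_zero_iff T b).mp hzero
end

section
/- Let b and T be positive integers and suppose there exists n₀ such that n^n ≡ (n+T)^(n+T) (mod b) for every n ≥ n₀. Then λ(b) divides T, where λ is the Carmichael function. -/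
/-!
Compare the two sides along `n ≡ 1 (mod b)`: the left one is `1`, so `(1 + T) ^ (n + T) ≡ 1`.
Passing from `n` to `n + b` gives `(1 + T) ^ b ≡ 1`, hence also `(1 + T) ^ (1 + T) ≡ 1`. As `1 + T`
is invertible modulo `b`, the exponents `b` and `1 + T` are coprime, so `1 + T ≡ 1`, that is
`b ∣ T`. Along `n ≡ u` for a unit `u`, the congruence now reads `u ^ n ≡ u ^ (n + T)`, so
`u ^ T ≡ 1`.
-/

open Filter

theorem natCast_eq_one_of_pow_self_eq_one_of_pow_modulus_eq_one {a b : ℕ} (ha : a ≠ 0)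
    (h_self : (a : ZMod b) ^ a = 1) (h_modulus : (a : ZMod b) ^ b = 1) : (a : ZMod b) = 1 := by
  have h_coprime : a.Coprime b := (ZMod.isUnit_iff_coprime a b).1 (.of_pow_eq_one h_self ha)
  simpa [h_coprime.gcd_eq_one] using pow_gcd_eq_one.2 ⟨h_self, h_modulus⟩

section EventuallyPeriodic

variable {b T : ℕ} [NeZero b]

theorem dvd_of_eventually_pow_self_eq
    (h : ∀ᶠ n : ℕ in atTop, (n : ZMod b) ^ n = (n + T : ZMod b) ^ (n + T)) : b ∣ T := by
  obtain ⟨n, hn_mod, hn, hn_add⟩ := ((Nat.frequently_modEq (NeZero.ne b) 1).and_eventually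
    (h.and ((tendsto_add_atTop_nat b).eventually h))).exists
  have hn_cast : (n : ZMod b) = 1 := by
    exact_mod_cast (ZMod.natCast_eq_natCast_iff n 1 b).2 hn_mod
  have h_pow : ((1 + T : ℕ) : ZMod b) ^ (n + T) = 1 := by
    simpa [hn_cast] using hn.symm
  have h_pow_add : ((1 + T : ℕ) : ZMod b) ^ (n + T + b) = 1 := by
    simpa [hn_cast, add_right_comm] using hn_add.symm
  have h_modulus : ((1 + T : ℕ) : ZMod b) ^ b = 1 := by
    rwa [pow_add, h_pow, one_mul] at h_pow_add
  have h_self : ((1 + T : ℕ) : ZMod b) ^ (1 + T) = 1 :=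
    (pow_eq_pow_of_modEq (hn_mod.add_right T) h_modulus).symm.trans h_pow
  have h_one : ((1 + T : ℕ) : ZMod b) = 1 :=
    natCast_eq_one_of_pow_self_eq_one_of_pow_modulus_eq_one (by lia) h_self h_modulus
  exact (ZMod.natCast_eq_zero_iff T b).1 (by simpa using h_one)

theorem units_pow_eq_one_of_eventually_pow_self_eq
    (h : ∀ᶠ n : ℕ in atTop, (n : ZMod b) ^ n = (n + T : ZMod b) ^ (n + T)) (u : (ZMod b)ˣ) :
    u ^ T = 1 := by
  have hT : (T : ZMod b) = 0 := (ZMod.natCast_eq_zero_iff T b).2 (dvd_of_eventually_pow_self_eq h)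
  obtain ⟨n, hn_mod, hn⟩ :=
    ((Nat.frequently_modEq (NeZero.ne b) (u : ZMod b).val).and_eventually h).exists
  have hn_cast : (n : ZMod b) = u := by
    simpa using (ZMod.natCast_eq_natCast_iff n (u : ZMod b).val b).2 hn_mod
  have h_pow : u ^ n = u ^ n * u ^ T := by
    rw [hn_cast, hT, add_zero, pow_add] at hn
    exact_mod_cast hn
  exact mul_eq_left.1 h_pow.symm

end EventuallyPeriodic

theorem stmt_2 (b T : ℕ) (hb : 0 < b) (hT : 0 < T)
    (hper : ∃ n₀ : ℕ, ∀ n ≥ n₀, n ^ n % b = (n + T) ^ (n + T) % b) :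
    carmichael b ∣ T := by
  have : NeZero b := ⟨hb.ne'⟩
  have h_cast : ∀ᶠ n : ℕ in atTop, (n : ZMod b) ^ n = (n + T : ZMod b) ^ (n + T) := by
    filter_upwards [eventually_atTop.2 hper] with n hn
    exact_mod_cast (ZMod.natCast_eq_natCast_iff _ _ b).2 hn
  exact Monoid.exponent_dvd_of_forall_pow_eq_one
    (units_pow_eq_one_of_eventually_pow_self_eq h_cast)
end

section
/- For every positive integer b, the sequence S_b(n) = n^n mod b is eventually periodic, and its least eventual period equals H(b) = lcm(b, λ(b)), where λ is the Carmichael function. That is: S_b(n) = S_b(n + H(b)) for all sufficiently large n, and any T ≥ 1 with S_b(n) = S_b(n+T) for all sufficiently large n satisfies H(b) ∣ T. -/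
/-!
Everything happens for the sequence `n ↦ (n : ZMod b) ^ n`. In a finite ring each `a` has a unit `u`
with `a ^ (n + m) = a ^ n * u ^ m` for all large `n`, so common multiples of `b` and `λ(b)` are
periods.

Conversely let `T` be an eventual period. Far along the multiples of `b` the sequence vanishes, so
`T` is nilpotent modulo `b` and `1 + T` is coprime to `b`. Far along `n ≡ 1` the sequence is `1`,
so `(1 + T) ^ n = 1` for all large `n ≡ 1 + T`; hence the order of `1 + T` divides both `b` and
`1 + T`, and `T ≡ 0`. Finally, along `n ≡ u` with `u` a unit, `u ^ n = u ^ (n + T)` gives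
`u ^ T = 1`.
-/

open Filter

/-- The sequence `f` is periodic with period `T` from some index on. The trivial period `T = 0` is
allowed, so that the eventual periods can be described as the multiples of a number. -/
def IsEventualPeriod {α : Type*} (f : ℕ → α) (T : ℕ) : Prop :=
  ∀ᶠ n in atTop, f n = f (n + T)

section Monoid

variable {M : Type*} [Monoid M]

theorem exists_pos_isIdempotentElem_pow [Finite M] (a : M) :
    ∃ n, 0 < n ∧ IsIdempotentElem (a ^ n) := by
  obtain ⟨i, j, hij, heq⟩ :=
    Set.finite_univ.exists_lt_map_eq_of_forall_mem fun n : ℕ => Set.mem_univ (a ^ n)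
  obtain ⟨p, rfl⟩ := Nat.exists_eq_add_of_le hij.le
  have hp : 0 < p := by omega
  have hperiod (k : ℕ) : a ^ i * a ^ (p * k) = a ^ i := by
    induction k with
    | zero => simp
    | succ k ih => rw [mul_add_one, pow_add, ← mul_assoc, ih, ← pow_add, ← heq]
  have hle : i ≤ p * (i + 1) := i.le_succ.trans (Nat.le_mul_of_pos_left _ hp)
  refine ⟨p * (i + 1), by positivity, ?_⟩
  calc a ^ (p * (i + 1)) * a ^ (p * (i + 1))
      = a ^ (p * (i + 1) - i) * (a ^ i * a ^ (p * (i + 1))) := by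
        rw [← mul_assoc, pow_sub_mul_pow a hle]
    _ = a ^ (p * (i + 1)) := by rw [hperiod, pow_sub_mul_pow a hle]

theorem pow_mul_pow_eq_pow_add {a c : M} {n : ℕ} (h : a ^ n * c = a ^ (n + 1)) (m : ℕ) :
    a ^ n * c ^ m = a ^ (n + m) := by
  induction m with
  | zero => simp
  | succ m ih =>
    calc a ^ n * c ^ (m + 1) = a ^ m * (a ^ n * c) := by
          rw [pow_succ, ← mul_assoc, ih, add_comm, pow_add, mul_assoc]
      _ = a ^ (n + (m + 1)) := by rw [h, ← pow_add]; congr 1; omega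

end Monoid

section FiniteRing

variable {R : Type*} [Ring R] [Finite R]

theorem exists_units_pow_mul_eq_pow_succ (a : R) : ∃ (u : Rˣ) (n : ℕ), a ^ n * u = a ^ (n + 1) := by
  -- For the idempotent `e = a ^ n`, the unit is `a * e + (1 - e)`: it acts as `a` on `e * R` and as
  -- `1` on `(1 - e) * R`.
  obtain ⟨n, hn, hidem⟩ := exists_pos_isIdempotentElem_pow a
  have hmul : a ^ n * (a ^ (n + 1) + (1 - a ^ n)) = a ^ (n + 1) := by
    rw [mul_add, hidem.mul_one_sub_self, add_zero, pow_succ, ← mul_assoc, hidem.eq]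
  have hreg : IsLeftRegular (a ^ (n + 1) + (1 - a ^ n)) := by
    refine isLeftRegular_iff_right_eq_zero_of_mul.2 fun x hx => ?_
    have hsucc : a ^ (n + 1) * x = 0 := by rw [← hmul, mul_assoc, hx, mul_zero]
    have hpow : a ^ n * x = 0 := by
      calc a ^ n * x = a ^ (n - 1) * (a ^ (n + 1) * x) := by
            rw [← hidem.eq, ← mul_assoc, ← pow_add, ← pow_add]; congr 2; omega
        _ = 0 := by rw [hsucc, mul_zero]
    simpa [add_mul, sub_mul, hsucc, hpow] using hx
  obtain ⟨u, hu⟩ := hreg.isUnit_of_finite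
  exact ⟨u, n, hu ▸ hmul⟩

theorem eventually_pow_add_eq_pow {m : ℕ} (hm : Monoid.exponent Rˣ ∣ m) (a : R) :
    ∀ᶠ n in atTop, a ^ (n + m) = a ^ n := by
  obtain ⟨u, k, hu⟩ := exists_units_pow_mul_eq_pow_succ a
  have hum : (u : R) ^ m = 1 := by
    rw [← Units.val_pow_eq_pow_val, Monoid.exponent_dvd_iff_forall_pow_eq_one.1 hm u,
      Units.val_one]
  have hk : a ^ (k + m) = a ^ k := by rw [← pow_mul_pow_eq_pow_add hu, hum, mul_one]
  filter_upwards [eventually_ge_atTop k] with n hn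
  obtain ⟨j, rfl⟩ := Nat.exists_eq_add_of_le' hn
  rw [add_assoc, pow_add, hk, ← pow_add]

theorem isEventualPeriod_natCast_pow_self {T : ℕ} (hT : (T : R) = 0)
    (hexp : Monoid.exponent Rˣ ∣ T) : IsEventualPeriod (fun n : ℕ => (n : R) ^ n) T := by
  filter_upwards [eventually_all.2 (eventually_pow_add_eq_pow (R := R) hexp)] with n hn
  rw [Nat.cast_add, hT, add_zero, hn]

end FiniteRing

namespace IsEventualPeriod

variable {b T : ℕ} [NeZero b]

theorem eventually_natCast_pow_eq (h : IsEventualPeriod (fun n : ℕ => (n : ZMod b) ^ n) T) (a : ℕ) :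
    ∀ᶠ k in atTop, (a : ZMod b) ^ (k * b + a) = (a + T : ZMod b) ^ (k * b + a + T) := by
  have htop : Tendsto (fun k : ℕ => k * b + a) atTop atTop :=
    tendsto_atTop_mono (fun k => le_add_right (Nat.le_mul_of_pos_right k (NeZero.pos b))) tendsto_id
  filter_upwards [htop.eventually h] with k hk
  simpa using hk

theorem isNilpotent_natCast (h : IsEventualPeriod (fun n : ℕ => (n : ZMod b) ^ n) T) :
    IsNilpotent (T : ZMod b) := by
  obtain ⟨k, hk, hpos⟩ := ((h.eventually_natCast_pow_eq 0).and (eventually_gt_atTop 0)).exists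
  refine ⟨k * b + T, ?_⟩
  have hkb : k * b ≠ 0 := mul_ne_zero hpos.ne' (NeZero.ne b)
  simpa [hkb] using hk.symm

theorem one_add_natCast_pow_eq_one (h : IsEventualPeriod (fun n : ℕ => (n : ZMod b) ^ n) T) :
    (1 + T : ZMod b) ^ b = 1 ∧ (1 + T : ZMod b) ^ (1 + T) = 1 := by
  have hlate : ∀ᶠ k in atTop, (1 + T : ZMod b) ^ (k * b + (1 + T)) = 1 := by
    filter_upwards [h.eventually_natCast_pow_eq 1] with k hk
    simpa [add_assoc] using hk.symm
  obtain ⟨k, hk, hk'⟩ := (hlate.and ((tendsto_add_atTop_nat 1).eventually hlate)).exists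
  have hb : (1 + T : ZMod b) ^ b = 1 := by
    rwa [add_one_mul, add_right_comm, pow_add, hk, one_mul] at hk'
  refine ⟨hb, ?_⟩
  rwa [pow_add, mul_comm k, pow_mul, hb, one_pow, one_mul] at hk

theorem natCast_eq_zero (h : IsEventualPeriod (fun n : ℕ => (n : ZMod b) ^ n) T) :
    (T : ZMod b) = 0 := by
  have hcoprime : b.Coprime (1 + T) := by
    refine ((ZMod.isUnit_iff_coprime (1 + T) b).1 ?_).symm
    exact_mod_cast h.isNilpotent_natCast.isUnit_one_add
  have hone : (1 + T : ZMod b) = 1 :=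
    (pow_eq_one_iff_of_coprime hcoprime).1 h.one_add_natCast_pow_eq_one
  simpa using hone

theorem carmichael_dvd (h : IsEventualPeriod (fun n : ℕ => (n : ZMod b) ^ n) T) :
    carmichael b ∣ T := by
  refine Monoid.exponent_dvd_of_forall_pow_eq_one fun u => ?_
  obtain ⟨k, hk⟩ := (h.eventually_natCast_pow_eq (u : ZMod b).val).exists
  rw [h.natCast_eq_zero, add_zero, ZMod.natCast_zmod_val, pow_add _ _ T] at hk
  exact left_eq_mul.1 (Units.ext (by exact_mod_cast hk))

end IsEventualPeriod

theorem isEventualPeriod_zmod_pow_self_iff {b T : ℕ} [NeZero b] :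
    IsEventualPeriod (fun n : ℕ => (n : ZMod b) ^ n) T ↔ H b ∣ T := by
  rw [H, Nat.lcm_dvd_iff, ← ZMod.natCast_eq_zero_iff]
  exact ⟨fun h => ⟨h.natCast_eq_zero, h.carmichael_dvd⟩,
    fun h => isEventualPeriod_natCast_pow_self h.1 h.2⟩

theorem stmt_3 (b : ℕ) (hb : 0 < b) :
    (∃ n₀ : ℕ, ∀ n ≥ n₀, n ^ n % b = (n + H b) ^ (n + H b) % b) ∧
      (∀ T : ℕ, 0 < T →
        (∃ n₀ : ℕ, ∀ n ≥ n₀, n ^ n % b = (n + T) ^ (n + T) % b) → H b ∣ T) := by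
  have : NeZero b := ⟨hb.ne'⟩
  have period_iff (T : ℕ) :
      (∃ n₀ : ℕ, ∀ n ≥ n₀, n ^ n % b = (n + T) ^ (n + T) % b) ↔ H b ∣ T := by
    simp only [← isEventualPeriod_zmod_pow_self_iff, IsEventualPeriod, eventually_atTop,
      ← ZMod.natCast_eq_natCast_iff', Nat.cast_pow]
  exact ⟨(period_iff _).2 dvd_rfl, fun T _ => (period_iff T).1⟩
end

section
/- Let b be a positive integer with prime factorization b = p_1^{s_1} ⋯ p_t^{s_t}. The sequence S_b(n) = n^n mod b is (purely) periodic (i.e., S_b(n) = S_b(n + H(b)) for every n ≥ 1, where H(b) = lcm(b, λ(b))) if and only if s_i ≤ p_i for every i ∈ {1, …, t}. -/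
/-!
Since `b ∣ H b`, the shift by `H b` does not change the base of `n ^ n` modulo `b`, so periodicity
asks for `n ^ n ≡ n ^ (n + H b)`. For `n = p` with `p ^ s ∣ b`, the shifted term is divisible by
`p ^ s`, hence so is `p ^ p`, which forces `s ≤ p`. Conversely, if `s ≤ p ≤ n` whenever `p ∣ n`,
then the common factor `gcd (b, n ^ n)` absorbs every prime that `b` shares with `n`. The remaining
factor of `b` is coprime to `n`, and modulo it `n ^ H b ≡ 1` because its Carmichael function
divides `λ(b)`.
-/

theorem pow_modEq_one_of_carmichael_dvd_s4 {n e h : ℕ} (hne : n.Coprime e)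
    (hh : ArithmeticFunction.carmichael e ∣ h) : n ^ h ≡ 1 [MOD e] := by
  obtain ⟨k, rfl⟩ := hh
  have hunit : ZMod.unitOfCoprime n hne ^ (ArithmeticFunction.carmichael e * k) = 1 := by
    rw [pow_mul, ArithmeticFunction.pow_carmichael, one_pow]
  rw [← ZMod.natCast_eq_natCast_iff]
  simpa using congrArg Units.val hunit

theorem pow_add_modEq_pow_of_dvd_pow_mul {b n m e h : ℕ} (hb : b ∣ n ^ m * e)
    (hne : n.Coprime e) (hh : ArithmeticFunction.carmichael e ∣ h) :
    n ^ (m + h) ≡ n ^ m [MOD b] := by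
  have hmul : n ^ m * n ^ h ≡ n ^ m * 1 [MOD n ^ m * e] :=
    (pow_modEq_one_of_carmichael_dvd_s4 hne hh).mul_left' (n ^ m)
  rw [pow_add]
  simpa only [mul_one] using hmul.of_dvd hb

theorem coprime_div_gcd_pow_of_factorization_le {b n m : ℕ} (hb : b ≠ 0)
    (hfac : ∀ p : ℕ, p.Prime → p ∣ n → b.factorization p ≤ m) :
    n.Coprime (b / b.gcd (n ^ m)) := by
  by_contra hcop
  obtain ⟨p, hp, hpn, hpq⟩ := Nat.Prime.not_coprime_iff_dvd.mp hcop
  have hgcd : p ^ b.factorization p ∣ b.gcd (n ^ m) :=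
    Nat.dvd_gcd (Nat.ordProj_dvd b p)
      ((pow_dvd_pow p (hfac p hp hpn)).trans (pow_dvd_pow_of_dvd hpn m))
  have hdvd : p ^ (b.factorization p + 1) ∣ b := calc
    p ^ b.factorization p * p ∣ b.gcd (n ^ m) * (b / b.gcd (n ^ m)) := mul_dvd_mul hgcd hpq
    _ = b := Nat.mul_div_cancel' (Nat.gcd_dvd_left b (n ^ m))
  exact Nat.pow_succ_factorization_not_dvd hb hp hdvd

theorem pow_add_modEq_pow_of_factorization_le {b n m h : ℕ} (hb : b ≠ 0)
    (hfac : ∀ p : ℕ, p.Prime → p ∣ n → b.factorization p ≤ m)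
    (hh : ArithmeticFunction.carmichael b ∣ h) : n ^ (m + h) ≡ n ^ m [MOD b] := by
  have hgcd : b.gcd (n ^ m) ∣ b := Nat.gcd_dvd_left b (n ^ m)
  have hb_dvd : b ∣ n ^ m * (b / b.gcd (n ^ m)) := calc
    b = b.gcd (n ^ m) * (b / b.gcd (n ^ m)) := (Nat.mul_div_cancel' hgcd).symm
    _ ∣ n ^ m * (b / b.gcd (n ^ m)) := mul_dvd_mul_right (Nat.gcd_dvd_right b (n ^ m)) _
  exact pow_add_modEq_pow_of_dvd_pow_mul hb_dvd (coprime_div_gcd_pow_of_factorization_le hb hfac)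
    ((ArithmeticFunction.carmichael_dvd (Nat.div_dvd_of_dvd hgcd)).trans hh)

theorem le_of_pow_modEq_pow_of_dvd {a c k l m : ℕ} (ha : 1 < a) (hac : a ∣ c) (hkl : k ≤ l)
    (hmod : a ^ m ≡ c ^ l [MOD a ^ k]) : k ≤ m := by
  have hdvd : a ^ k ∣ c ^ l := (pow_dvd_pow a hkl).trans (pow_dvd_pow_of_dvd hac l)
  exact (Nat.pow_dvd_pow_iff_le_right ha).mp ((hmod.dvd_iff dvd_rfl).mpr hdvd)

theorem dvd_H (b : ℕ) : b ∣ H b := Nat.dvd_lcm_left b (carmichael b)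

theorem carmichael_dvd_H {b : ℕ} (hb : b ≠ 0) : ArithmeticFunction.carmichael b ∣ H b := by
  rw [ArithmeticFunction.carmichael_eq_exponent hb]
  exact Nat.dvd_lcm_right b (carmichael b)

theorem H_pos {b : ℕ} (hb : 0 < b) : 0 < H b := by
  have : NeZero b := ⟨hb.ne'⟩
  exact Nat.lcm_pos hb (Monoid.exponent_pos.mpr Monoid.ExponentExists.of_finite)

theorem stmt_4 (b : ℕ) (hb : 0 < b) :
    (∀ n : ℕ, 1 ≤ n → n ^ n % b = (n + H b) ^ (n + H b) % b) ↔
      ∀ p : ℕ, p.Prime → p ∣ b → b.factorization p ≤ p := by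
  constructor
  · intro hper p hp hpb
    have hmod : p ^ p ≡ (p + H b) ^ (p + H b) [MOD p ^ b.factorization p] :=
      Nat.ModEq.of_dvd (Nat.ordProj_dvd b p) (hper p hp.one_le)
    have hdvd : p ∣ p + H b := (dvd_refl p).add (hpb.trans (dvd_H b))
    have hle : b.factorization p ≤ p + H b :=
      (Nat.factorization_lt p hb.ne').le.trans
        ((Nat.le_of_dvd (H_pos hb) (dvd_H b)).trans (Nat.le_add_left (H b) p))
    exact le_of_pow_modEq_pow_of_dvd hp.one_lt hdvd hle hmod
  · intro hfac n hn
    have hfac_n (p : ℕ) (hp : p.Prime) (hpn : p ∣ n) : b.factorization p ≤ n := by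
      by_cases hpb : p ∣ b
      · exact (hfac p hp hpb).trans (Nat.le_of_dvd hn hpn)
      · simp [Nat.factorization_eq_zero_of_not_dvd hpb]
    have hbase : n ≡ n + H b [MOD b] :=
      (Nat.modEq_zero_iff_dvd.mpr (dvd_H b)).symm.add_left n
    have hexp : n ^ (n + H b) ≡ n ^ n [MOD b] :=
      pow_add_modEq_pow_of_factorization_le hb.ne' hfac_n (carmichael_dvd_H hb.ne')
    exact hexp.symm.trans (hbase.pow (n + H b))
end

section
/- Let b = 2m be an even square-free positive integer. Then for every positive integer n, the last non-zero digit of n^n in base b equals m if and only if the last non-zero digit of n in base b equals m. That is, {n : 𝔖_b(n) = m} = {n : L_b(n) = m}. -/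
/-- The last non-zero digit of `n` in base `b`: if `n = b^r * n'` with `b ∤ n'`,
this is `n' % b`. -/
def lastNonzeroDigit (b n : ℕ) : ℕ := (n / b ^ (Nat.maxPowDiv b n)) % b

/-- `𝔖_b(n)`: the last non-zero digit of `n^n` in base `b`. -/
def lnz (b n : ℕ) : ℕ := lastNonzeroDigit b (n ^ n)

/-!
Write `n = b ^ r * n'` with `b ∤ n'`. If `b` is squarefree, then also `b ∤ n' ^ k`, so
`n ^ k = b ^ (r * k) * n' ^ k` shows that the last nonzero digit of `n ^ k` is congruent modulo `b`
to the `k`-th power of that of `n`. Hence a divisor of `b`, being squarefree too, divides one of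
these digits iff it divides the other. In base `2 * m`, the only nonzero digit divisible by `m`
is `m` itself.
-/

theorem divMaxPow_eq_self_of_not_dvd {b n : ℕ} (h : ¬b ∣ n) : n.divMaxPow b = n := by
  rw [Nat.divMaxPow, Nat.maxPowDvdDiv_of_not_dvd h]

theorem divMaxPow_pow_of_squarefree {b : ℕ} (hb : Squarefree b) (n k : ℕ) :
    (n ^ k).divMaxPow b = n.divMaxPow b ^ k := by
  rcases eq_or_ne k 0 with rfl | hk
  · simp
  rcases eq_or_ne n 0 with rfl | hn
  · simp [hk]
  rcases eq_or_ne b 1 with rfl | hb_one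
  · simp
  have hb_lt : 1 < b := Nat.one_lt_iff_ne_zero_and_ne_one.2 ⟨hb.ne_zero, hb_one⟩
  have not_dvd_pow : ¬b ∣ n.divMaxPow b ^ k := by
    rw [hb.dvd_pow_iff_dvd hk]
    exact Nat.not_dvd_divMaxPow hb_lt hn
  calc (n ^ k).divMaxPow b
      = (b ^ (padicValNat b n * k) * n.divMaxPow b ^ k).divMaxPow b := by
        rw [pow_mul, ← mul_pow, Nat.pow_padicValNat_mul_divMaxPow]
    _ = (n.divMaxPow b ^ k).divMaxPow b := Nat.divMaxPow_base_pow_mul hb.ne_zero _ _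
    _ = n.divMaxPow b ^ k := divMaxPow_eq_self_of_not_dvd not_dvd_pow

theorem lastNonzeroDigit_eq_divMaxPow_mod (b n : ℕ) :
    lastNonzeroDigit b n = n.divMaxPow b % b := by
  change n / b ^ padicValNat b n % b = n.divMaxPow b % b
  rcases eq_or_ne b 0 with rfl | hb
  · simp
  · rw [Nat.div_eq_of_eq_mul_right (by positivity) (Nat.pow_padicValNat_mul_divMaxPow b n).symm]

theorem lastNonzeroDigit_lt {b : ℕ} (hb : 0 < b) (n : ℕ) : lastNonzeroDigit b n < b :=
  Nat.mod_lt _ hb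

theorem lastNonzeroDigit_ne_zero {b n : ℕ} (hb : 1 < b) (hn : n ≠ 0) :
    lastNonzeroDigit b n ≠ 0 := by
  rw [lastNonzeroDigit_eq_divMaxPow_mod, Ne, ← Nat.dvd_iff_mod_eq_zero]
  exact Nat.not_dvd_divMaxPow hb hn

theorem lastNonzeroDigit_pow {b : ℕ} (hb : Squarefree b) (n k : ℕ) :
    lastNonzeroDigit b (n ^ k) = lastNonzeroDigit b n ^ k % b := by
  simp only [lastNonzeroDigit_eq_divMaxPow_mod]
  rw [divMaxPow_pow_of_squarefree hb, Nat.pow_mod]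

theorem dvd_lastNonzeroDigit_two_mul_iff {m n : ℕ} (hm : 0 < m) (hn : n ≠ 0) :
    m ∣ lastNonzeroDigit (2 * m) n ↔ lastNonzeroDigit (2 * m) n = m where
  mp h := Nat.eq_of_dvd_of_lt_two_mul (lastNonzeroDigit_ne_zero (by lia) hn) h
    (lastNonzeroDigit_lt (by lia) n)
  mpr h := h.symm.dvd

theorem stmt_6_general {b d k : ℕ} (hb : Squarefree b) (hd : d ∣ b) (hk : k ≠ 0) (n : ℕ) :
    d ∣ lastNonzeroDigit b (n ^ k) ↔ d ∣ lastNonzeroDigit b n := by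
  rw [lastNonzeroDigit_pow hb, Nat.dvd_mod_iff hd, (hb.squarefree_of_dvd hd).dvd_pow_iff_dvd hk]

theorem stmt_6 (m : ℕ) (hm : 0 < m) (hsf : Squarefree (2 * m)) :
    ∀ n : ℕ, 0 < n → (lnz (2 * m) n = m ↔ lastNonzeroDigit (2 * m) n = m) := by
  intro n hn
  rw [lnz, ← dvd_lastNonzeroDigit_two_mul_iff hm (pow_pos hn n).ne',
    ← dvd_lastNonzeroDigit_two_mul_iff hm hn.ne']
  exact stmt_6_general hsf (Nat.dvd_mul_left m 2) hn.ne' n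
end

section
/- If p is a prime, then for every positive integer n, the last non-zero digit of n^n in base p equals the last non-zero digit of (pn)^(pn) in base p; i.e., 𝔖_p(n) = 𝔖_p(pn). -/
theorem lastNonzeroDigit_base_pow_mul {b : ℕ} (hb : b ≠ 0) (n k : ℕ) :
    lastNonzeroDigit b (b ^ k * n) = lastNonzeroDigit b n := by
  simp only [lastNonzeroDigit_eq_divMaxPow_mod, Nat.divMaxPow_base_pow_mul hb]

theorem divMaxPow_pow_of_isRadical {b : ℕ} (hb : IsRadical b) (n k : ℕ) :
    (n ^ k).divMaxPow b = n.divMaxPow b ^ k := by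
  rcases le_or_gt b 1 with hb_le | hb_gt
  · simp only [← Nat.snd_maxPowDvdDiv, Nat.maxPowDvdDiv_of_base_le_one hb_le]
  rcases eq_or_ne n 0 with rfl | hn
  · cases k <;> simp
  have hfactor : b ^ (padicValNat b n * k) * n.divMaxPow b ^ k = n ^ k := by
    rw [pow_mul, ← mul_pow, Nat.pow_padicValNat_mul_divMaxPow]
  have hndvd : ¬ b ∣ n.divMaxPow b ^ k := mt (hb k _) (Nat.not_dvd_divMaxPow hb_gt hn)
  exact congrArg Prod.snd (Nat.maxPowDvdDiv_of_pow_mul_eq (pow_ne_zero k hn) hfactor hndvd)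

theorem lastNonzeroDigit_pow_modEq {b : ℕ} (hb : IsRadical b) (n k : ℕ) :
    lastNonzeroDigit b (n ^ k) ≡ lastNonzeroDigit b n ^ k [MOD b] := by
  simp only [lastNonzeroDigit_eq_divMaxPow_mod, divMaxPow_pow_of_isRadical hb]
  exact (Nat.mod_modEq _ b).trans ((Nat.mod_modEq _ b).symm.pow k)

theorem isRadical_of_pow_modEq_self {b k : ℕ} (hk : 1 < k) (h : ∀ a, a ^ k ≡ a [MOD b]) :
    IsRadical b :=
  (isRadical_iff_pow_one_lt k hk).2 fun a ha ↦ ((h a).dvd_iff dvd_rfl).1 ha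

theorem lastNonzeroDigit_pow_of_pow_modEq_self {b k : ℕ} (hk : 1 < k)
    (h : ∀ a, a ^ k ≡ a [MOD b]) (n : ℕ) :
    lastNonzeroDigit b (n ^ k) = lastNonzeroDigit b n := by
  have hmod : lastNonzeroDigit b (n ^ k) ≡ lastNonzeroDigit b n [MOD b] :=
    (lastNonzeroDigit_pow_modEq (isRadical_of_pow_modEq_self hk h) n k).trans (h _)
  simpa only [Nat.ModEq, lastNonzeroDigit, Nat.mod_mod] using hmod

theorem pow_prime_modEq_self {p : ℕ} (hp : p.Prime) (a : ℕ) : a ^ p ≡ a [MOD p] :=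
  Int.natCast_modEq_iff.1 (mod_cast Int.ModEq.pow_prime_eq_self hp a)

theorem stmt_8_general {b : ℕ} (hb : 1 < b) (h : ∀ a, a ^ b ≡ a [MOD b]) (n : ℕ) :
    lnz b n = lnz b (b * n) := by
  have hpow : (b * n) ^ (b * n) = b ^ (b * n) * (n ^ n) ^ b := by
    rw [mul_pow, ← pow_mul, mul_comm n b]
  calc lastNonzeroDigit b (n ^ n)
    _ = lastNonzeroDigit b ((n ^ n) ^ b) :=
      (lastNonzeroDigit_pow_of_pow_modEq_self hb h _).symm
    _ = lastNonzeroDigit b (b ^ (b * n) * (n ^ n) ^ b) :=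
      (lastNonzeroDigit_base_pow_mul (Nat.ne_zero_of_lt hb) _ _).symm
    _ = lastNonzeroDigit b ((b * n) ^ (b * n)) := by rw [hpow]

theorem stmt_8 (p : ℕ) (hp : p.Prime) (n : ℕ) (hn : 0 < n) :
    lnz p n = lnz p (p * n) :=
  stmt_8_general hp.one_lt (pow_prime_modEq_self hp) n
end

section
/- If p is an odd prime, then the sequence 𝔖_p(n) of last non-zero digits of n^n in base p is not eventually periodic. -/
/-!
Modulo `p`, Frobenius gives `lnz p (p ^ r * m) = m ^ m` when `p ∤ m`. Write a putative period as
`T = p ^ s * t` with `p ∤ t`. For `k > s` this gives `lnz p (p ^ k * u + T) = t ^ (u + t)`, which by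
Fermat depends only on `u` modulo `p - 1`, whereas `lnz p (p ^ k * u) = u ^ u` takes the values `1`
at `u = 1` and `-1` at `u = 2 * p - 1 = 1 + 2 * (p - 1)`.
-/

theorem lastNonzeroDigit_pow_mul {b m : ℕ} (hb : 1 < b) (r : ℕ) (hm : ¬ b ∣ m) :
    lastNonzeroDigit b (b ^ r * m) = m % b := by
  have hm_ne_zero : m ≠ 0 := fun h => hm (h ▸ dvd_zero b)
  have hval : padicValNat b (b ^ r * m) = r := by
    rw [padicValNat_base_pow_mul hb hm_ne_zero, padicValNat.eq_zero_of_not_dvd hm, zero_add]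
  change b ^ r * m / b ^ padicValNat b (b ^ r * m) % b = m % b
  rw [hval, Nat.mul_div_cancel_left m (pow_pos (zero_lt_one.trans hb) r)]

theorem natCast_one_add_two_mul_sub_one {n : ℕ} (hn : 0 < n) :
    ((1 + 2 * (n - 1) : ℕ) : ZMod n) = -1 := by
  rw [Nat.cast_add, Nat.cast_mul, Nat.cast_pred hn, ZMod.natCast_self]
  norm_num

section Prime

variable {p : ℕ} [Fact p.Prime]

theorem natCast_lnz_pow_mul (r : ℕ) {m : ℕ} (hm : ¬ p ∣ m) :
    (lnz p (p ^ r * m) : ZMod p) = (m : ZMod p) ^ m := by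
  have hp : p.Prime := Fact.out
  have hpow : (p ^ r * m) ^ (p ^ r * m) = p ^ (r * (p ^ r * m)) * m ^ (p ^ r * m) := by
    rw [mul_pow, ← pow_mul]
  rw [lnz, hpow, lastNonzeroDigit_pow_mul hp.one_lt _ (mt hp.dvd_of_dvd_pow hm),
    ZMod.natCast_mod, Nat.cast_pow, pow_mul, ZMod.pow_card_pow]

theorem natCast_lnz_pow_mul_add {s k t : ℕ} (hsk : s < k) (u : ℕ) (ht : ¬ p ∣ t) :
    (lnz p (p ^ k * u + p ^ s * t) : ZMod p) = (t : ZMod p) ^ (u + t) := by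
  obtain ⟨j, rfl⟩ := Nat.exists_eq_add_of_lt hsk
  have hfactor : p ^ (s + j + 1) * u + p ^ s * t = p ^ s * (p ^ (j + 1) * u + t) := by ring
  have hp_dvd : p ∣ p ^ (j + 1) * u := (dvd_pow_self p j.succ_ne_zero).mul_right u
  have hcast : ((p ^ (j + 1) * u + t : ℕ) : ZMod p) = t := by
    rw [Nat.cast_add, (CharP.cast_eq_zero_iff (ZMod p) p _).2 hp_dvd, zero_add]
  rw [hfactor, natCast_lnz_pow_mul s (mt (Nat.dvd_add_right hp_dvd).1 ht), hcast, pow_add,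
    pow_mul, ZMod.pow_card_pow, ← pow_add]

theorem pow_add_eq_pow_self_of_lnz_add_eq {s t n₀ : ℕ} (ht : ¬ p ∣ t)
    (hperiod : ∀ n ≥ n₀, lnz p (n + p ^ s * t) = lnz p n) {u : ℕ} (hu : ¬ p ∣ u) :
    (t : ZMod p) ^ (u + t) = (u : ZMod p) ^ u := by
  have hp : p.Prime := Fact.out
  have hu_pos : 0 < u := Nat.pos_of_ne_zero fun h => hu (h ▸ dvd_zero p)
  let k := s + n₀ + 1
  have hk : n₀ ≤ p ^ k * u := calc
    n₀ ≤ k := by omega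
    _ ≤ p ^ k := (Nat.lt_pow_self hp.one_lt).le
    _ ≤ p ^ k * u := Nat.le_mul_of_pos_right _ hu_pos
  rw [← natCast_lnz_pow_mul_add (by omega : s < k) u ht, hperiod _ hk, natCast_lnz_pow_mul k hu]

theorem exists_pow_add_ne_pow_self (hp_two : 2 < p) {t : ℕ} (ht : ¬ p ∣ t) :
    ∃ u : ℕ, ¬ p ∣ u ∧ (t : ZMod p) ^ (u + t) ≠ (u : ZMod p) ^ u := by
  have hp : p.Prime := Fact.out
  by_contra! heq
  let u := 1 + 2 * (p - 1)
  have hu_cast : (u : ZMod p) = -1 := natCast_one_add_two_mul_sub_one hp.pos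
  have hu : ¬ p ∣ u := by
    rw [← CharP.cast_eq_zero_iff (ZMod p) p, hu_cast]
    exact neg_ne_zero.2 one_ne_zero
  have ht_cast : (t : ZMod p) ≠ 0 := mt (CharP.cast_eq_zero_iff (ZMod p) p t).1 ht
  have : Fact (2 < p) := ⟨hp_two⟩
  apply ZMod.neg_one_ne_one (n := p)
  calc
    (-1 : ZMod p) = (u : ZMod p) ^ u := by
      rw [hu_cast, (odd_one.add_even (even_two_mul _) : Odd u).neg_one_pow]
    _ = (t : ZMod p) ^ (u + t) := (heq u hu).symm
    _ = ((t : ZMod p) ^ (p - 1)) ^ 2 * (t : ZMod p) ^ (1 + t) := by ring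
    _ = (t : ZMod p) ^ (1 + t) := by rw [ZMod.pow_card_sub_one_eq_one ht_cast, one_pow, one_mul]
    _ = ((1 : ℕ) : ZMod p) ^ 1 := heq 1 hp.not_dvd_one
    _ = 1 := by rw [Nat.cast_one, one_pow]

end Prime

theorem stmt_10 (p : ℕ) (hp : p.Prime) (hodd : Odd p) :
    ¬ ∃ T : ℕ, 0 < T ∧ ∃ n₀ : ℕ, ∀ n ≥ n₀, lnz p (n + T) = lnz p n := by
  rintro ⟨T, hT, n₀, hperiod⟩
  have : Fact p.Prime := ⟨hp⟩
  obtain ⟨s, t, ht, rfl⟩ := Nat.exists_eq_pow_mul_and_not_dvd hT.ne' p hp.ne_one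
  obtain ⟨u, hu, hne⟩ := exists_pow_add_ne_pow_self (hp.odd_iff.1 hodd) ht
  exact hne (pow_add_eq_pow_self_of_lnz_add_eq ht hperiod hu)
end

section
/- Let p be a prime, t > 1 an integer, and define S(n) = 𝔖_{p^t}(p^t·n). If the sequence S is eventually periodic, then t is a power of p, i.e., t = p^s for some integer s ≥ 0. -/
theorem padicValNat_pow_left (p t n : ℕ) : padicValNat (p ^ t) n = padicValNat p n / t := by
  obtain rfl | ht := eq_or_ne t 0
  · simp
  obtain rfl | hp := eq_or_ne p 1
  · simp
  obtain rfl | hn := eq_or_ne n 0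
  · simp
  refine eq_of_forall_le_iff fun k => ?_
  have hpt : p ^ t ≠ 1 := by simp [hp, ht]
  rw [← Nat.pow_dvd_iff_le_padicValNat hpt hn, ← pow_mul, Nat.pow_dvd_iff_le_padicValNat hp hn,
    Nat.le_div_iff_mul_le (Nat.pos_of_ne_zero ht), mul_comm]

theorem padicValNat_mod_pow {p t n : ℕ} (h : ¬ p ^ t ∣ n) :
    padicValNat p (n % p ^ t) = padicValNat p n := by
  have hp : p ≠ 1 := by rintro rfl; simp at h
  have hn : n ≠ 0 := by rintro rfl; simp at h
  have hmod : n % p ^ t ≠ 0 := mt Nat.dvd_of_mod_eq_zero h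
  refine eq_of_forall_le_iff fun k => ?_
  rw [← Nat.pow_dvd_iff_le_padicValNat hp hmod, ← Nat.pow_dvd_iff_le_padicValNat hp hn]
  obtain hk | hk := le_total k t
  · exact Nat.dvd_mod_iff (pow_dvd_pow p hk)
  · exact iff_of_false
      (fun hdvd => h ((Nat.dvd_mod_iff dvd_rfl).1 ((pow_dvd_pow p hk).trans hdvd)))
      (fun hdvd => h ((pow_dvd_pow p hk).trans hdvd))

theorem padicValNat_divMaxPow_pow {p n : ℕ} (hp : 1 < p) (hn : n ≠ 0) (t : ℕ) :
    padicValNat p (n.divMaxPow (p ^ t)) = padicValNat p n % t := by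
  have hfactor : p ^ (t * (padicValNat p n / t)) * n.divMaxPow (p ^ t) = n := by
    rw [pow_mul, ← padicValNat_pow_left, Nat.pow_padicValNat_mul_divMaxPow]
  have hval := congrArg (padicValNat p) hfactor
  rw [padicValNat_base_pow_mul hp (right_ne_zero_of_mul (hfactor ▸ hn))] at hval
  have := Nat.mod_add_div (padicValNat p n) t
  omega

theorem padicValNat_lastNonzeroDigit {p t n : ℕ} (hp : 1 < p) (ht : t ≠ 0) (hn : n ≠ 0) :
    padicValNat p (lastNonzeroDigit (p ^ t) n) = padicValNat p n % t := by
  rw [lastNonzeroDigit_eq_divMaxPow_mod,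
    padicValNat_mod_pow (Nat.not_dvd_divMaxPow (Nat.one_lt_pow ht hp) hn),
    padicValNat_divMaxPow_pow hp hn]

theorem padicValNat_lnz {p t : ℕ} (hp : p.Prime) (ht : t ≠ 0) (n : ℕ) :
    padicValNat p (lnz (p ^ t) n) = n * padicValNat p n % t := by
  have := Fact.mk hp
  rw [lnz, padicValNat_lastNonzeroDigit hp.one_lt ht Nat.pow_self_pos.ne', padicValNat.pow]

theorem dvd_of_lnz_eq {p t a b : ℕ} (hp : p.Prime) (ht : t ≠ 0)
    (hlnz : lnz (p ^ t) a = lnz (p ^ t) b) (hab : a ≡ b [MOD t])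
    (hval : padicValNat p b = padicValNat p a + 1) : t ∣ b := by
  have hmod : a * padicValNat p a ≡ b * padicValNat p b [MOD t] := by
    simpa only [padicValNat_lnz hp ht, Nat.ModEq] using congrArg (padicValNat p) hlnz
  have hcancel : b * padicValNat p a + 0 ≡ b * padicValNat p a + b [MOD t] := calc
    b * padicValNat p a ≡ a * padicValNat p a [MOD t] := hab.symm.mul_right _
    _ ≡ b * padicValNat p b [MOD t] := hmod
    _ = b * padicValNat p a + b := by rw [hval, mul_add_one]
  exact Nat.modEq_zero_iff_dvd.1 hcancel.add_left_cancel'.symm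

theorem exists_ge_add_eq_mul_coprime {p k : ℕ} (hp : p ≠ 0) (hk : k ≠ 0) (d N : ℕ) :
    ∃ x ≥ N, ∃ y, k.Coprime y ∧ x + d = p * y := by
  have hle : N + d ≤ p * (k * (N + d) + 1) := calc
    N + d ≤ k * (N + d) := Nat.le_mul_of_pos_left _ (Nat.pos_of_ne_zero hk)
    _ ≤ k * (N + d) + 1 := Nat.le_succ _
    _ ≤ p * (k * (N + d) + 1) := Nat.le_mul_of_pos_left _ (Nat.pos_of_ne_zero hp)
  exact ⟨p * (k * (N + d) + 1) - d, by omega, k * (N + d) + 1, by simp, by omega⟩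

theorem exists_ge_padicValNat_add_eq_succ_and_coprime {p t d : ℕ} (hp : 1 < p) (ht : t ≠ 0)
    (hd : d ≠ 0) (N : ℕ) :
    ∃ n ≥ N, n ≠ 0 ∧ padicValNat p (n + d) = padicValNat p n + 1 ∧
      t.Coprime ((n + d).divMaxPow p) := by
  have hp₀ : p ≠ 0 := by omega
  obtain ⟨x, hNx, y, hcop, hxy⟩ :=
    exists_ge_add_eq_mul_coprime hp₀ (mul_ne_zero hp₀ ht) (d.divMaxPow p) N
  have hpy : ¬ p ∣ y := fun h => hp.ne' (hcop.coprime_mul_right.eq_one_of_dvd h)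
  have hpx : ¬ p ∣ x := fun h =>
    Nat.not_dvd_divMaxPow hp hd ((Nat.dvd_add_right h).1 (hxy ▸ dvd_mul_right p y))
  have hx₀ : x ≠ 0 := by rintro rfl; exact hpx (dvd_zero p)
  have hy₀ : y ≠ 0 := by rintro rfl; exact hpy (dvd_zero p)
  have hsum : p ^ padicValNat p d * x + d = p ^ (padicValNat p d + 1) * y := calc
    p ^ padicValNat p d * x + d = p ^ padicValNat p d * (x + d.divMaxPow p) := by
      rw [mul_add, Nat.pow_padicValNat_mul_divMaxPow p d]
    _ = p ^ (padicValNat p d + 1) * y := by rw [hxy, pow_succ, mul_assoc]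
  refine ⟨p ^ padicValNat p d * x, ?_, by positivity, ?_, ?_⟩
  · exact hNx.trans (Nat.le_mul_of_pos_left x (by positivity))
  · rw [hsum, padicValNat_base_pow_mul hp hy₀, padicValNat_base_pow_mul hp hx₀,
      padicValNat.eq_zero_of_not_dvd hpx, padicValNat.eq_zero_of_not_dvd hpy, add_assoc]
  · rw [hsum, Nat.divMaxPow_base_pow_mul hp₀, Nat.divMaxPow, Nat.maxPowDvdDiv_of_not_dvd hpy]
    exact hcop.coprime_mul_left

theorem apply_add_mul_of_eventually_periodic {α : Type*} {f : ℕ → α} {T n₀ : ℕ}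
    (hf : ∀ n ≥ n₀, f (n + T) = f n) (k : ℕ) {n : ℕ} (hn : n₀ ≤ n) : f (n + k * T) = f n := by
  have hshift : Function.Periodic (fun i => f (n + i)) T := fun i => by
    simpa only [add_assoc] using hf (n + i) (hn.trans (Nat.le_add_right n i))
  exact hshift.nat_mul_eq k

theorem stmt_15_general (p t m : ℕ) (hp : p.Prime) (ht : t ≠ 0)
    (hper : ∃ T : ℕ, 0 < T ∧ ∃ n₀ : ℕ, ∀ n ≥ n₀,
      lnz (p ^ t) (m * (n + T)) = lnz (p ^ t) (m * n)) :
    ∃ s : ℕ, t ∣ p ^ s * m := by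
  obtain rfl | hm := eq_or_ne m 0
  · simp
  obtain ⟨T, hT, n₀, hper⟩ := hper
  have := Fact.mk hp
  obtain ⟨n, hn, hn₀, hval, hcop⟩ :=
    exists_ge_padicValNat_add_eq_succ_and_coprime hp.one_lt ht (mul_ne_zero ht hT.ne') n₀
  have hlnz := apply_add_mul_of_eventually_periodic (f := fun n => lnz (p ^ t) (m * n)) hper t hn
  have hmodEq : m * n ≡ m * (n + t * T) [MOD t] := by simp [Nat.ModEq, mul_add, mul_left_comm m t]
  have hval_mul : padicValNat p (m * (n + t * T)) = padicValNat p (m * n) + 1 := by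
    rw [padicValNat.mul hm (by omega), padicValNat.mul hm hn₀, hval, add_assoc]
  have hdvd : t ∣ m * (n + t * T) := dvd_of_lnz_eq hp ht hlnz.symm hmodEq hval_mul
  rw [← Nat.pow_padicValNat_mul_divMaxPow p (n + t * T), ← mul_assoc, mul_comm m] at hdvd
  exact ⟨_, hcop.dvd_of_dvd_mul_right hdvd⟩

theorem stmt_15 (p t : ℕ) (hp : p.Prime) (ht : 1 < t)
    (hper : ∃ T : ℕ, 0 < T ∧ ∃ n₀ : ℕ, ∀ n ≥ n₀,
      lnz (p ^ t) (p ^ t * (n + T)) = lnz (p ^ t) (p ^ t * n)) :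
    ∃ s : ℕ, t = p ^ s := by
  obtain ⟨s, hs⟩ := stmt_15_general p t (p ^ t) hp (by omega) hper
  rw [← pow_add] at hs
  exact ((Nat.dvd_prime_pow hp).1 hs).imp fun _ h => h.2
end
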